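/- arXiv:1606.04624 — 3 statements merged into one kernel-verified Lean document; each statement's English description precedes it below -/
import Mathlib

section
/- Let n be a positive integer and let f : R^n -> R be twice continuously differentiable. Then f is submodular if and only if every entry of its Hessian is nonpositive everywhere, i.e., for all x in R^n and all indices i, j (including i = j), the second-order partial derivative d^2 f / dx_i dx_j (x) <= 0. -/
/-!
Submodularity of `f` says that every forward difference `x ↦ f (x + δ) - f x` with `0 ≤ δ` is
antitone. An antitone function is one whose derivative is nonpositive in nonnegative directions;
for the forward difference this derivative is `fderiv ℝ f (x + δ) v - fderiv ℝ f x v`, so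
submodularity means that the directional derivatives of `f` along nonnegative vectors are antitone.
On `ℝⁿ` the coordinate directions suffice, and the same criterion for each partial derivative
yields the sign of the Hessian entries.
-/

/-- Submodularity in the sense of decreasing increments: adding `0 ≤ δ` increases `f` at most as
much from a larger starting point. Since `y - x` and `δ` may share coordinates, on `ℝⁿ` this is
stronger than the lattice inequality `f (x ⊔ y) + f (x ⊓ y) ≤ f x + f y`, and it constrains the
diagonal of the Hessian too. -/
def IsSubmodular {E β : Type*} [AddZeroClass E] [LE E] [Sub β] [LE β] (f : E → β) : Prop :=
  ∀ x y : E, x ≤ y → ∀ δ : E, 0 ≤ δ → f (y + δ) - f y ≤ f (x + δ) - f x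

theorem isSubmodular_iff_antitone_sub {E β : Type*} [AddZeroClass E] [Preorder E] [Sub β]
    [Preorder β] {f : E → β} :
    IsSubmodular f ↔ ∀ δ : E, 0 ≤ δ → Antitone fun x => f (x + δ) - f x :=
  ⟨fun h δ hδ x y hxy => h x y hxy δ hδ, fun h _ _ hxy δ hδ => h δ hδ hxy⟩

section OrderedNormedSpace

variable {E : Type*} [NormedAddCommGroup E] [NormedSpace ℝ E] [PartialOrder E]
  [IsOrderedAddMonoid E] [PosSMulMono ℝ E] {f : E → ℝ}

theorem antitone_iff_fderiv_nonpos (hf : Differentiable ℝ f) :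
    Antitone f ↔ ∀ x v : E, 0 ≤ v → fderiv ℝ f x v ≤ 0 := by
  refine ⟨fun h x v hv => ?_, fun h x y hxy => ?_⟩
  · have line_mono : Monotone fun t : ℝ => x + t • v := fun s t hst => by
      dsimp only
      gcongr
    rw [← (hf x).lineDeriv_eq_fderiv]
    exact (h.comp_monotone line_mono).deriv_nonpos
  · obtain ⟨z, -, hz⟩ : ∃ z ∈ segment ℝ x y, f y - f x = fderiv ℝ f z (y - x) :=
      domain_mvt (fun z _ => (hf z).hasFDerivAt.hasFDerivWithinAt) convex_univ
        (Set.mem_univ x) (Set.mem_univ y)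
    exact sub_nonpos.mp (hz.trans_le (h z _ (sub_nonneg.mpr hxy)))

theorem isSubmodular_iff_antitone_fderiv (hf : Differentiable ℝ f) :
    IsSubmodular f ↔ ∀ v : E, 0 ≤ v → Antitone fun x => fderiv ℝ f x v := by
  have fderiv_difference (δ x v : E) :
      fderiv ℝ (fun z => f (z + δ) - f z) x v = fderiv ℝ f (x + δ) v - fderiv ℝ f x v := by
    rw [fderiv_fun_sub (by fun_prop) (hf x), fderiv_comp_add_right, sub_apply]
  have antitone_difference_iff (δ : E) : (Antitone fun z => f (z + δ) - f z) ↔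
      ∀ x v : E, 0 ≤ v → fderiv ℝ f (x + δ) v ≤ fderiv ℝ f x v := by
    simp only [antitone_iff_fderiv_nonpos (f := fun z => f (z + δ) - f z) (by fun_prop),
      fderiv_difference, sub_nonpos]
  simp only [isSubmodular_iff_antitone_sub, antitone_difference_iff]
  refine ⟨fun h v hv x y hxy => ?_, fun h δ hδ x v hv => h v hv (le_add_of_nonneg_right hδ)⟩
  simpa only [add_sub_cancel] using h (y - x) (sub_nonneg.mpr hxy) x v hv

end OrderedNormedSpace

theorem forall_nonneg_map_nonpos_iff_single {ι R M : Type*} [Finite ι] [DecidableEq ι]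
    [Semiring R] [PartialOrder R] [ZeroLEOneClass R] [AddCommMonoid M] [PartialOrder M]
    [IsOrderedAddMonoid M] [Module R M] [PosSMulMono R M] (L : (ι → R) →ₗ[R] M) :
    (∀ v : ι → R, 0 ≤ v → L v ≤ 0) ↔ ∀ i, L (Pi.single i 1) ≤ 0 := by
  refine ⟨fun h i => h _ (Pi.single_nonneg.mpr zero_le_one), fun h v hv => ?_⟩
  cases nonempty_fintype ι
  rw [pi_eq_sum_univ' v, map_sum]
  refine Finset.sum_nonpos fun i _ => ?_
  rw [map_smul]
  exact smul_nonpos_of_nonneg_of_nonpos (hv i) (h i)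

section Pi

variable {ι : Type*} [Finite ι] [DecidableEq ι] {f : (ι → ℝ) → ℝ}

theorem antitone_iff_fderiv_single_nonpos (hf : Differentiable ℝ f) :
    Antitone f ↔ ∀ x i, fderiv ℝ f x (Pi.single i 1) ≤ 0 := by
  cases nonempty_fintype ι
  rw [antitone_iff_fderiv_nonpos hf]
  exact forall_congr' fun x => forall_nonneg_map_nonpos_iff_single (fderiv ℝ f x).toLinearMap

theorem isSubmodular_iff_antitone_fderiv_single (hf : Differentiable ℝ f) :
    IsSubmodular f ↔ ∀ i, Antitone fun x => fderiv ℝ f x (Pi.single i 1) := by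
  cases nonempty_fintype ι
  rw [isSubmodular_iff_antitone_fderiv hf]
  refine ⟨fun h i => h _ (Pi.single_nonneg.mpr zero_le_one), fun h v hv x y hxy => ?_⟩
  refine sub_nonpos.mp <| (forall_nonneg_map_nonpos_iff_single
    (fderiv ℝ f y - fderiv ℝ f x).toLinearMap).mpr (fun i => ?_) v hv
  exact sub_nonpos.mpr (h i hxy)

theorem c2_submodular_iff_hessian_nonpos_general (hf : Differentiable ℝ f)
    (hf' : ∀ i, Differentiable ℝ fun y => fderiv ℝ f y (Pi.single i 1)) :
    IsSubmodular f ↔ ∀ (x : ι → ℝ) (i j : ι),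
      fderiv ℝ (fun y => fderiv ℝ f y (Pi.single i 1)) x (Pi.single j 1) ≤ 0 := by
  simp only [isSubmodular_iff_antitone_fderiv_single hf,
    fun i => antitone_iff_fderiv_single_nonpos (hf' i)]
  exact forall_comm

end Pi

/-- A `C²` function `f : ℝⁿ → ℝ` is submodular (i.e. `f(x+δ) - f(x) ≥ f(y+δ) - f(y)`
whenever `x ≤ y` componentwise and `δ ≥ 0` componentwise) if and only if every entry
of its Hessian is nonpositive everywhere. -/
theorem c2_submodular_iff_hessian_nonpos (n : ℕ) (hn : 0 < n)
    (f : (Fin n → ℝ) → ℝ) (hf : ContDiff ℝ 2 f) :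
    (∀ x y : Fin n → ℝ, x ≤ y → ∀ δ : Fin n → ℝ, 0 ≤ δ →
      f (y + δ) - f y ≤ f (x + δ) - f x) ↔
    (∀ x : Fin n → ℝ, ∀ i j : Fin n,
      fderiv ℝ (fun y => fderiv ℝ f y (Pi.single i 1)) x (Pi.single j 1) ≤ 0) := by
  have hf' : Differentiable ℝ (fderiv ℝ f) :=
    (hf.fderiv_right (m := 1) (by norm_num)).differentiable one_ne_zero
  exact c2_submodular_iff_hessian_nonpos_general (hf.differentiable two_ne_zero)
    fun i => hf'.clm_apply (differentiable_const _)
end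

section
/- Fix sigma_1 > 0, sigma_2 > 0, sigma_W > 0 and c >= 0. Define sigmatilde_i^2(z) = sigma_i^2 * z / (sigma_W^2 / sigma_i^2 + z), s(z_1, z_2) = sqrt(sigmatilde_1^2(z_1) + sigmatilde_2^2(z_2)), and v(z_1, z_2) = s(z_1, z_2) * f(-c / s(z_1, z_2)), where f(a) = a*Phi(a) + phi(a) with Phi the standard normal cumulative distribution function and phi the standard normal density. Then for all z_1 > 0 and z_2 > 0, the mixed second partial derivative d^2 v / (dz_1 dz_2) at (z_1, z_2) is nonpositive if and only if c^2 <= sigmatilde_1^2(z_1) + sigmatilde_2^2(z_2). -/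
/-- The standard normal density `φ(ζ) = exp(-ζ²/2)/√(2π)`. -/
noncomputable def stdGaussPDF (ζ : ℝ) : ℝ :=
  (1 / Real.sqrt (2 * Real.pi)) * Real.exp (-ζ ^ 2 / 2)

/-- The standard normal cumulative distribution function `Φ(ζ) = ∫_{-∞}^ζ φ`. -/
noncomputable def stdGaussCDF (ζ : ℝ) : ℝ := ∫ t in Set.Iic ζ, stdGaussPDF t

/-- `f(a) = a·Φ(a) + φ(a)`. -/
noncomputable def fKG (a : ℝ) : ℝ := a * stdGaussCDF a + stdGaussPDF a

/-- `σ̃ᵢ²(z) = σᵢ² z / (σ_W²/σᵢ² + z)`. -/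
noncomputable def sigmatildeSq (σ σW z : ℝ) : ℝ := σ ^ 2 * z / (σW ^ 2 / σ ^ 2 + z)

/-- `σ̃ᵢ(z) = √(σ̃ᵢ²(z))`. -/
noncomputable def sigmatilde (σ σW z : ℝ) : ℝ := Real.sqrt (sigmatildeSq σ σW z)

/-- `s(z₁,z₂) = √(σ̃₁²(z₁) + σ̃₂²(z₂))`. -/
noncomputable def sAlloc (σ1 σ2 σW z1 z2 : ℝ) : ℝ :=
  Real.sqrt (sigmatildeSq σ1 σW z1 + sigmatildeSq σ2 σW z2)

/-- The value of information `v(z₁,z₂) = s(z₁,z₂)·f(-c/s(z₁,z₂))` of the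
allocation `(z₁,z₂)`, with `c = |θ₁⁰ - θ₂⁰|`. -/
noncomputable def voi (σ1 σ2 σW c z1 z2 : ℝ) : ℝ :=
  sAlloc σ1 σ2 σW z1 z2 * fKG (-c / sAlloc σ1 σ2 σW z1 z2)

/-!
With `F u = √u · f(-c/√u)`, the value of information is `F (σ̃₁² + σ̃₂²)`, a function of a sum of
increasing one-variable functions, so its mixed partial has the sign of `F''`. Since `f' = Φ`, the
tail probabilities cancel in the derivative of `s · f(-c/s)`, which is `φ(-c/s)`. Hence
`F' u = φ(-c/√u) / (2√u)`, and one more differentiation gives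
`F'' u = φ(-c/√u) (c² - u) / (4 u^{5/2})`.
-/

section Calculus

open Filter MeasureTheory Set Topology

lemma hasDerivAt_integral_Iic {E : Type*} [NormedAddCommGroup E] [NormedSpace ℝ E]
    [CompleteSpace E] {f : ℝ → E} {x b : ℝ} (hxb : x < b) (hint : IntegrableOn f (Iic b))
    (hf : ContinuousAt f x) : HasDerivAt (fun y => ∫ t in Iic y, f t) (f x) x := by
  have hintIic : ∀ y ≤ b, IntegrableOn f (Iic y) := fun y hy => hint.mono_set (Iic_subset_Iic.2 hy)
  have hsplit : (fun y => ∫ t in Iic y, f t) =ᶠ[𝓝 x]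
      fun y => (∫ t in Iic x, f t) + ∫ t in x..y, f t := by
    filter_upwards [Iio_mem_nhds hxb] with y hy
    rw [← intervalIntegral.integral_Iic_sub_Iic (hintIic x hxb.le) (hintIic y (le_of_lt hy)),
      add_sub_cancel]
  have hmeas : StronglyMeasurableAtFilter f (𝓝 x) :=
    ⟨Iic b, Iic_mem_nhds hxb, hint.aestronglyMeasurable⟩
  exact ((intervalIntegral.integral_hasDerivAt_right IntervalIntegrable.refl hmeas hf).const_add
    _).congr_of_eventuallyEq hsplit

variable {𝕜 : Type*} [NontriviallyNormedField 𝕜]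

lemma hasDerivAt_const_div (a : 𝕜) {s : 𝕜} (hs : s ≠ 0) :
    HasDerivAt (fun t => a / t) (-a / s ^ 2) s := by
  simpa using (hasDerivAt_const s a).fun_div (hasDerivAt_id' s) hs

lemma hasDerivAt_mul_comp_const_div {h : 𝕜 → 𝕜} {h' a s : 𝕜} (hs : s ≠ 0)
    (hh : HasDerivAt h h' (a / s)) :
    HasDerivAt (fun t => t * h (a / t)) (h (a / s) - a / s * h') s := by
  refine ((hasDerivAt_id' s).fun_mul (hh.comp s (hasDerivAt_const_div a hs))).congr_deriv ?_
  simp only [Function.comp_apply]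
  field_simp
  ring

lemma deriv_deriv_comp_add {F F' g h : 𝕜 → 𝕜} {F'' g' h' x y : 𝕜}
    (hF : ∀ᶠ u in 𝓝 (g x + h y), HasDerivAt F (F' u) u) (hF' : HasDerivAt F' F'' (g x + h y))
    (hg : HasDerivAt g g' x) (hh : HasDerivAt h h' y) :
    deriv (fun b => deriv (fun a => F (g a + h b)) x) y = F'' * h' * g' := by
  have hinner : (fun b => deriv (fun a => F (g a + h b)) x) =ᶠ[𝓝 y]
      fun b => F' (g x + h b) * g' := by
    filter_upwards [(hh.continuousAt.const_add (g x)).eventually hF] with b hb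
    exact (hb.comp x (hg.add_const (h b))).deriv
  have houter : HasDerivAt (fun b => F' (g x + h b) * g') (F'' * h' * g') y :=
    (hF'.comp y (hh.const_add (g x))).mul_const g'
  rw [hinner.deriv_eq, houter.deriv]

end Calculus

section StandardGaussian

open MeasureTheory ProbabilityTheory

lemma stdGaussPDF_eq_gaussianPDFReal : stdGaussPDF = gaussianPDFReal 0 1 := by
  ext ζ
  simp [stdGaussPDF, gaussianPDFReal]

lemma stdGaussPDF_pos (ζ : ℝ) : 0 < stdGaussPDF ζ := by
  simpa only [stdGaussPDF_eq_gaussianPDFReal] using gaussianPDFReal_pos 0 1 ζ one_ne_zero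

lemma integrable_stdGaussPDF : Integrable stdGaussPDF := by
  simpa only [stdGaussPDF_eq_gaussianPDFReal] using integrable_gaussianPDFReal 0 1

lemma hasDerivAt_stdGaussPDF (ζ : ℝ) : HasDerivAt stdGaussPDF (-ζ * stdGaussPDF ζ) ζ := by
  have hexponent : HasDerivAt (fun t : ℝ => -t ^ 2 / 2) (-ζ) ζ :=
    (((hasDerivAt_pow 2 ζ).fun_neg).div_const 2).congr_deriv (by ring)
  refine (hexponent.exp.const_mul (1 / Real.sqrt (2 * Real.pi))).congr_deriv ?_
  rw [stdGaussPDF]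
  ring

lemma hasDerivAt_stdGaussCDF (ζ : ℝ) : HasDerivAt stdGaussCDF (stdGaussPDF ζ) ζ :=
  hasDerivAt_integral_Iic (lt_add_one ζ) integrable_stdGaussPDF.integrableOn
    (hasDerivAt_stdGaussPDF ζ).continuousAt

lemma hasDerivAt_fKG (a : ℝ) : HasDerivAt fKG (stdGaussCDF a) a :=
  (((hasDerivAt_id' a).fun_mul (hasDerivAt_stdGaussCDF a)).fun_add
    (hasDerivAt_stdGaussPDF a)).congr_deriv (by ring)

end StandardGaussian

section ValueOfInformation

open Topology

/-- The value of information as a function of the total variance reduction `u = s²`, for a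
difference `c` of the prior means; `voi` is its composition with `σ̃₁² + σ̃₂²`. -/
noncomputable def voiOfVariance (c u : ℝ) : ℝ :=
  Real.sqrt u * fKG (-c / Real.sqrt u)

lemma hasDerivAt_mul_fKG_div (c : ℝ) {s : ℝ} (hs : s ≠ 0) :
    HasDerivAt (fun t => t * fKG (-c / t)) (stdGaussPDF (-c / s)) s :=
  (hasDerivAt_mul_comp_const_div hs (hasDerivAt_fKG (-c / s))).congr_deriv
    (by rw [fKG, add_sub_cancel_left])

lemma hasDerivAt_stdGaussPDF_div_two_mul (c : ℝ) {s : ℝ} (hs : s ≠ 0) :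
    HasDerivAt (fun t => stdGaussPDF (-c / t) / (2 * t))
      (stdGaussPDF (-c / s) * (c ^ 2 - s ^ 2) / (2 * s ^ 4)) s := by
  have hpdf : HasDerivAt (fun t => stdGaussPDF (-c / t)) (stdGaussPDF (-c / s) * c ^ 2 / s ^ 3) s :=
    ((hasDerivAt_stdGaussPDF (-c / s)).comp s (hasDerivAt_const_div (-c) hs)).congr_deriv
      (by field_simp)
  have hden : HasDerivAt (fun t : ℝ => 2 * t) 2 s := by
    simpa using (hasDerivAt_id' s).const_mul 2
  refine (hpdf.fun_div hden (mul_ne_zero two_ne_zero hs)).congr_deriv ?_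
  field_simp

lemma hasDerivAt_voiOfVariance (c : ℝ) {u : ℝ} (hu : 0 < u) :
    HasDerivAt (voiOfVariance c) (stdGaussPDF (-c / Real.sqrt u) / (2 * Real.sqrt u)) u :=
  ((hasDerivAt_mul_fKG_div c (Real.sqrt_ne_zero'.2 hu)).comp u
    (Real.hasDerivAt_sqrt hu.ne')).congr_deriv (by ring)

lemma hasDerivAt_deriv_voiOfVariance (c : ℝ) {u : ℝ} (hu : 0 < u) :
    HasDerivAt (fun t => stdGaussPDF (-c / Real.sqrt t) / (2 * Real.sqrt t))
      (stdGaussPDF (-c / Real.sqrt u) / (4 * Real.sqrt u ^ 5) * (c ^ 2 - u)) u := by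
  have hsqrt : Real.sqrt u ≠ 0 := Real.sqrt_ne_zero'.2 hu
  refine ((hasDerivAt_stdGaussPDF_div_two_mul c hsqrt).comp u
    (Real.hasDerivAt_sqrt hu.ne')).congr_deriv ?_
  rw [Real.sq_sqrt hu.le]
  field_simp
  ring

theorem voi_mixed_partial_nonpos_iff_general (c : ℝ) {V₁ V₂ : ℝ → ℝ} {V₁' V₂' z₁ z₂ : ℝ}
    (hV₁ : HasDerivAt V₁ V₁' z₁) (hV₂ : HasDerivAt V₂ V₂' z₂) (hV₁' : 0 < V₁') (hV₂' : 0 < V₂')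
    (hV : 0 < V₁ z₁ + V₂ z₂) :
    deriv (fun b => deriv (fun a => voiOfVariance c (V₁ a + V₂ b)) z₁) z₂ ≤ 0 ↔
      c ^ 2 ≤ V₁ z₁ + V₂ z₂ := by
  have hF : ∀ᶠ u in 𝓝 (V₁ z₁ + V₂ z₂), HasDerivAt (voiOfVariance c)
      (stdGaussPDF (-c / Real.sqrt u) / (2 * Real.sqrt u)) u :=
    (lt_mem_nhds hV).mono fun _ => hasDerivAt_voiOfVariance c
  rw [deriv_deriv_comp_add hF (hasDerivAt_deriv_voiOfVariance c hV) hV₁ hV₂]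
  have hcoeff : 0 < stdGaussPDF (-c / Real.sqrt (V₁ z₁ + V₂ z₂)) /
      (4 * Real.sqrt (V₁ z₁ + V₂ z₂) ^ 5) :=
    div_pos (stdGaussPDF_pos _) (mul_pos four_pos (pow_pos (Real.sqrt_pos.2 hV) 5))
  rw [← smul_eq_mul, smul_nonpos_iff_nonpos_of_pos_right hV₁', ← smul_eq_mul,
    smul_nonpos_iff_nonpos_of_pos_right hV₂', ← smul_eq_mul,
    smul_nonpos_iff_nonpos_of_pos_left hcoeff, sub_nonpos]

lemma sigmatildeSq_pos {σ σW z : ℝ} (hσ : σ ≠ 0) (hz : 0 < z) : 0 < sigmatildeSq σ σW z := by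
  rw [sigmatildeSq]
  positivity

lemma hasDerivAt_sigmatildeSq {σ σW z : ℝ} (hσ : σ ≠ 0) (hz : σW ^ 2 / σ ^ 2 + z ≠ 0) :
    HasDerivAt (sigmatildeSq σ σW) (σW ^ 2 / (σW ^ 2 / σ ^ 2 + z) ^ 2) z := by
  refine (((hasDerivAt_id' z).const_mul (σ ^ 2)).fun_div
    ((hasDerivAt_id' z).const_add (σW ^ 2 / σ ^ 2)) hz).congr_deriv ?_
  congr 1
  field_simp
  ring

end ValueOfInformation

/-- The mixed second partial derivative of the value of information at
`(z₁, z₂)` with `z₁, z₂ > 0` is nonpositive if and only if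
`c² ≤ σ̃₁²(z₁) + σ̃₂²(z₂)`. -/
theorem voi_mixed_partial_nonpos_iff (σ1 σ2 σW c : ℝ)
    (h1 : 0 < σ1) (h2 : 0 < σ2) (hW : 0 < σW) (hc : 0 ≤ c) :
    ∀ z1 z2 : ℝ, 0 < z1 → 0 < z2 →
      (deriv (fun b => deriv (fun a => voi σ1 σ2 σW c a b) z1) z2 ≤ 0 ↔
        c ^ 2 ≤ sigmatildeSq σ1 σW z1 + sigmatildeSq σ2 σW z2) := by
  intro z1 z2 hz1 hz2
  exact voi_mixed_partial_nonpos_iff_general c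
    (hasDerivAt_sigmatildeSq h1.ne' (by positivity))
    (hasDerivAt_sigmatildeSq h2.ne' (by positivity))
    (by positivity) (by positivity)
    (add_pos (sigmatildeSq_pos h1.ne' hz1) (sigmatildeSq_pos h2.ne' hz2))
end

section
/- Fix sigma_1 > 0, sigma_2 > 0 and sigma_W > 0, and define sigmatilde_i^2(z) = sigma_i^2 * z / (sigma_W^2 / sigma_i^2 + z) for z >= 0 and i = 1, 2. Then the function s(z_1, z_2) = sqrt(sigmatilde_1^2(z_1) + sigmatilde_2^2(z_2)) is concave on [0, infinity)^2. -/
theorem concaveOn_fst_add_snd {𝕜 E F β : Type*} [Semiring 𝕜] [PartialOrder 𝕜]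
    [AddCommMonoid E] [Module 𝕜 E] [AddCommMonoid F] [Module 𝕜 F]
    [AddCommMonoid β] [PartialOrder β] [IsOrderedAddMonoid β] [Module 𝕜 β]
    {s : Set E} {t : Set F} {f : E → β} {g : F → β}
    (hf : ConcaveOn 𝕜 s f) (hg : ConcaveOn 𝕜 t g) :
    ConcaveOn 𝕜 (s ×ˢ t) fun z => f z.1 + g z.2 := by
  have hconv : Convex 𝕜 (s ×ˢ t) := hf.1.prod hg.1
  have hfst := (hf.comp_linearMap (LinearMap.fst 𝕜 E F)).subset (fun _ hz => hz.1) hconv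
  have hsnd := (hg.comp_linearMap (LinearMap.snd 𝕜 E F)).subset (fun _ hz => hz.2) hconv
  exact hfst.add hsnd

theorem concaveOn_sqrt_comp {E : Type*} [AddCommMonoid E] [SMul ℝ E] {s : Set E} {f : E → ℝ}
    (hf : ConcaveOn ℝ s f) (hf₀ : ∀ x ∈ s, 0 ≤ f x) : ConcaveOn ℝ s fun x => √(f x) :=
  ⟨hf.1, fun x hx y hy _ _ ha hb hab =>
    (Real.strictConcaveOn_sqrt.concaveOn.2 (hf₀ x hx) (hf₀ y hy) ha hb hab).trans
      (Real.sqrt_le_sqrt (hf.2 hx hy ha hb hab))⟩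

theorem concaveOn_div_const_add {𝕜 : Type*} [Field 𝕜] [LinearOrder 𝕜] [IsStrictOrderedRing 𝕜]
    {c : 𝕜} (hc : 0 ≤ c) : ConcaveOn 𝕜 (Set.Ioi (-c)) fun x => x / (c + x) := by
  have hinv : ConvexOn 𝕜 (Set.Ioi (-c)) fun x => (c + x)⁻¹ := by
    simpa [Function.comp_def, neg_lt_iff_pos_add'] using
      (convexOn_zpow (𝕜 := 𝕜) (-1)).translate_right c
  have heq : Set.EqOn (fun x => 1 - c * (c + x)⁻¹) (fun x => x / (c + x)) (Set.Ioi (-c)) := by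
    intro x hx
    have hcx : c + x ≠ 0 := (neg_lt_iff_pos_add'.mp hx).ne'
    field_simp
    ring
  exact ((concaveOn_const 1 (convex_Ioi (-c))).sub (hinv.smul hc)).congr heq

theorem sigmatildeSq_nonneg (σ σW : ℝ) {z : ℝ} (hz : 0 ≤ z) : 0 ≤ sigmatildeSq σ σW z := by
  unfold sigmatildeSq
  positivity

theorem concaveOn_sigmatildeSq {σ σW : ℝ} (hσ : σ ≠ 0) (hσW : σW ≠ 0) :
    ConcaveOn ℝ (Set.Ici 0) (sigmatildeSq σ σW) := by
  have hc : 0 < σW ^ 2 / σ ^ 2 := by positivity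
  have hsub : Set.Ici 0 ⊆ Set.Ioi (-(σW ^ 2 / σ ^ 2)) :=
    Set.Ici_subset_Ioi.mpr (neg_lt_zero.mpr hc)
  refine (((concaveOn_div_const_add hc.le).subset hsub (convex_Ici 0)).smul
    (sq_nonneg σ)).congr fun z _ => ?_
  simp only [sigmatildeSq, smul_eq_mul, mul_div_assoc]

/-- The standard deviation `s(z₁,z₂) = √(σ̃₁²(z₁) + σ̃₂²(z₂))` appearing in the
two-alternative value of information is concave on `[0,∞)²`. -/
theorem sAlloc_concaveOn (σ1 σ2 σW : ℝ) (h1 : 0 < σ1) (h2 : 0 < σ2) (hW : 0 < σW) :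
    ConcaveOn ℝ (Set.Ici (0 : ℝ) ×ˢ Set.Ici (0 : ℝ))
      (fun z : ℝ × ℝ =>
        Real.sqrt (sigmatildeSq σ1 σW z.1 + sigmatildeSq σ2 σW z.2)) := by
  have hsum := concaveOn_fst_add_snd (concaveOn_sigmatildeSq h1.ne' hW.ne')
    (concaveOn_sigmatildeSq h2.ne' hW.ne')
  exact concaveOn_sqrt_comp hsum fun z hz =>
    add_nonneg (sigmatildeSq_nonneg σ1 σW hz.1) (sigmatildeSq_nonneg σ2 σW hz.2)
end
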